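/- (Instance equivalence: from persuasion strategy to predictor.) Fix ε ≥ 0 and t ≥ 1, and let (π, b) be a sender strategy on signal set A in the associated persuasion instance such that: for every a with m(a) = Σ_i λ_i·π_i(a) > 0, the biased posterior mean p(a) = (b(a) + Σ_i λ_i·π_i(a)·θ_i)/m(a) lies in [0,1]; the values p(a) for a with m(a) > 0 are pairwise distinct; the agent's best-response at prediction p(a) in the calibration model is a, i.e., a*(p(a)) = a; and the bounded-rationality constraint (Σ_{a: m(a)>0} m(a)·|b(a)/m(a)|^t)^{1/t} ≤ ε holds. Define the predictor f by f_i(p) = Σ_{a∈A} π_i(a)·1{p(a) = p}. Then f is a finitely supported (ε,ℓ_t)-calibrated predictor and V(f) = Σ_i λ_i·Σ_a π_i(a)·u(a,θ_i), the sender's payoff when the receiver follows each recommendation. -/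

import Mathlib

open Finset

noncomputable section

namespace PersuasiveCalibration

/-- The environment of the persuasive calibration problem: `n` events with
probabilities `lam i > 0` summing to one and sorted expected outcomes `theta i ∈ [0,1]`. -/
structure Setup (n : ℕ) : Type where
  lam : Fin n → ℝ
  theta : Fin n → ℝ
  lam_pos : ∀ i, 0 < lam i
  lam_sum : ∑ i, lam i = 1
  theta_mono : Monotone theta
  theta_mem : ∀ i, theta i ∈ Set.Icc (0 : ℝ) 1

variable {n : ℕ}

/-- A finitely supported probability distribution on `[0,1]`. -/
def IsDist (μ : ℝ →₀ ℝ) : Prop :=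
  (∀ p, 0 ≤ μ p) ∧ (∀ p ∈ μ.support, p ∈ Set.Icc (0 : ℝ) 1) ∧ (∑ p ∈ μ.support, μ p) = 1

/-- A predictor assigns to each event a finitely supported probability distribution on `[0,1]`. -/
def IsPredictor (f : Fin n → ℝ →₀ ℝ) : Prop := ∀ i, IsDist (f i)

/-- The (unconditional) prediction space of a predictor. -/
def suppF (f : Fin n → ℝ →₀ ℝ) : Finset ℝ := Finset.univ.biUnion fun i => (f i).support

/-- The marginalized predictor `f(p) = ∑ i, λ i * f i p`. -/
def marginal (S : Setup n) (f : Fin n → ℝ →₀ ℝ) (p : ℝ) : ℝ := ∑ i, S.lam i * f i p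

/-- The true expected outcome conditional on the prediction `p`. -/
def kappa (S : Setup n) (f : Fin n → ℝ →₀ ℝ) (p : ℝ) : ℝ :=
  (∑ i, S.lam i * f i p * S.theta i) / marginal S f p

/-- The `ℓ_t`-norm expected calibration error of a predictor. -/
def ECE (S : Setup n) (t : ℝ) (f : Fin n → ℝ →₀ ℝ) : ℝ :=
  (∑ p ∈ suppF f, marginal S f p * |kappa S f p - p| ^ t) ^ (1 / t)

/-- The principal's expected payoff from predictor `f` with indirect utilities `U i`. -/
def payoff (S : Setup n) (U : Fin n → ℝ → ℝ) (f : Fin n → ℝ →₀ ℝ) : ℝ :=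
  ∑ i, S.lam i * ∑ p ∈ (f i).support, f i p * U i p

/-- The principal's payoff in the event-independent setting. -/
def payoffEI (S : Setup n) (U : ℝ → ℝ) (f : Fin n → ℝ →₀ ℝ) : ℝ :=
  payoff S (fun _ => U) f

/-- A predictor is perfectly calibrated if `κ(q) = q` on its support. -/
def PerfectlyCalibrated (S : Setup n) (g : Fin n → ℝ →₀ ℝ) : Prop :=
  ∀ q ∈ suppF g, kappa S g q = q

/-- An event-independent post-processing plan: a finitely supported probability
distribution on `[0,1] × [0,1]`; the first coordinate is `q`, the second is `p`. -/
def IsPlan (χ : ℝ × ℝ →₀ ℝ) : Prop :=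
  (∀ x, 0 ≤ χ x) ∧ (∀ x ∈ χ.support, x.1 ∈ Set.Icc (0 : ℝ) 1 ∧ x.2 ∈ Set.Icc (0 : ℝ) 1) ∧
    (∑ x ∈ χ.support, χ x) = 1

/-- The `ℓ_t` calibration cost `∑ χ(q,p) |q - p|^t` of a plan. -/
def planCost (t : ℝ) (χ : ℝ × ℝ →₀ ℝ) : ℝ := ∑ x ∈ χ.support, χ x * |x.1 - x.2| ^ t

/-- The `q`-marginal `∑_p χ(q, p)` of a plan. -/
def planMargQ (χ : ℝ × ℝ →₀ ℝ) (q : ℝ) : ℝ :=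
  ∑ x ∈ χ.support.filter fun x => x.1 = q, χ x

/-- Feasibility of a post-processing plan for a perfectly calibrated predictor `g` and
an `ℓ_t` ECE budget `ε`. -/
def FeasiblePlan (S : Setup n) (t ε : ℝ) (g : Fin n → ℝ →₀ ℝ) (χ : ℝ × ℝ →₀ ℝ) : Prop :=
  planCost t χ ≤ ε ^ t ∧ ∀ q, planMargQ χ q = marginal S g q

/-- The value `f_i(p) = ∑_q (g̃_i(q)/g(q)) χ(q,p)` of the predictor generated by `(g̃, χ)`. -/
def genVal (S : Setup n) (g : Fin n → ℝ →₀ ℝ) (χ : ℝ × ℝ →₀ ℝ) (i : Fin n) (p : ℝ) : ℝ :=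
  ∑ q ∈ suppF g, g i q / marginal S g q * χ (q, p)

/-- A predictor generated by some perfectly calibrated predictor and some feasible
event-independent post-processing plan. -/
def IsGenerated (S : Setup n) (t ε : ℝ) (f : Fin n → ℝ →₀ ℝ) : Prop :=
  ∃ (g : Fin n → ℝ →₀ ℝ) (χ : ℝ × ℝ →₀ ℝ),
    IsPredictor g ∧ PerfectlyCalibrated S g ∧ IsPlan χ ∧ FeasiblePlan S t ε g χ ∧
      ∀ i p, f i p = genVal S g χ i p

/-- The CDF of a finitely supported distribution. -/
def cdf (μ : ℝ →₀ ℝ) (x : ℝ) : ℝ := ∑ q ∈ μ.support.filter fun q => q ≤ x, μ q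

/-- The CDF of the distribution placing mass `λ_i` at `θ_i`. -/
def priorCdf (S : Setup n) (x : ℝ) : ℝ :=
  ∑ i ∈ Finset.univ.filter fun i => S.theta i ≤ x, S.lam i

/-- `μ` is a mean-preserving contraction of the distribution putting mass `λ_i` on `θ_i`. -/
def MPCprior (S : Setup n) (μ : ℝ →₀ ℝ) : Prop :=
  (∀ s ∈ Set.Icc (0 : ℝ) 1,
      (∫ x in (0 : ℝ)..s, cdf μ x) ≤ ∫ x in (0 : ℝ)..s, priorCdf S x) ∧
    (∫ x in (0 : ℝ)..(1 : ℝ), cdf μ x) = ∫ x in (0 : ℝ)..(1 : ℝ), priorCdf S x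

/-- The objective `∑ χ(q,p) U(p)` of the program LP-TwoStep. -/
def LPobj (U : ℝ → ℝ) (χ : ℝ × ℝ →₀ ℝ) : ℝ := ∑ x ∈ χ.support, χ x * U x.2

/-- Feasibility for the program LP-TwoStep. -/
def LPFeasible (S : Setup n) (ε t : ℝ) (χ : ℝ × ℝ →₀ ℝ) (g : ℝ →₀ ℝ) : Prop :=
  (∀ x, 0 ≤ χ x) ∧
  (∀ x ∈ χ.support, x.1 ∈ Set.Icc (0 : ℝ) 1 ∧ x.2 ∈ Set.Icc (0 : ℝ) 1) ∧
  planCost t χ ≤ ε ^ t ∧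
  (∀ q, planMargQ χ q = g q) ∧ IsDist g ∧ MPCprior S g

/-- The optimal value of LP-TwoStep. -/
def OPTLP (S : Setup n) (ε t : ℝ) (U : ℝ → ℝ) : ℝ :=
  sSup {v | ∃ (χ : ℝ × ℝ →₀ ℝ) (g : ℝ →₀ ℝ), LPFeasible S ε t χ g ∧ v = LPobj U χ}

/-- Symmetric linear-tailed convex function with linear tails `[0, xL]`, `[xH, 1]` and
tail slopes `s1`, `s2` of equal absolute value. -/
def SymLinTailedConvex (Γ : ℝ → ℝ) (xL xH s1 s2 : ℝ) : Prop :=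
  ConvexOn ℝ (Set.Icc (0 : ℝ) 1) Γ ∧ 0 ≤ xL ∧ xL ≤ xH ∧ xH ≤ 1 ∧ |s1| = |s2| ∧
    (∃ c1, ∀ x ∈ Set.Icc (0 : ℝ) xL, Γ x = c1 + s1 * x) ∧
    (∃ c2, ∀ x ∈ Set.Icc xH (1 : ℝ), Γ x = c2 + s2 * x)

/-- Tuples `(i, j, q, p)` indexing a bi-event post-processing plan. -/
abbrev BiTuple (n : ℕ) := Fin n × Fin n × ℝ × ℝ

/-- The contribution ratio `r_{i,j}(q)`. -/
def ratio (S : Setup n) (i j : Fin n) (q : ℝ) : ℝ :=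
  if S.theta i < S.theta j then (S.theta j - q) / (S.theta j - S.theta i) else 1

/-- The contribution of the tuple `x = (i', j', q, p)` to event `i`:
`r_{i,j'}(q)` if `i' = i`, and `1 - r_{i',i}(q)` if `j' = i ≠ i'`. -/
def contrib (S : Setup n) (x : BiTuple n) (i : Fin n) : ℝ :=
  (if x.1 = i then ratio S x.1 x.2.1 x.2.2.1 else 0) +
    (if x.2.1 = i ∧ x.1 ≠ i then 1 - ratio S x.1 x.2.1 x.2.2.1 else 0)

/-- A bi-event post-processing plan. -/
def IsBiPlan (S : Setup n) (χ : BiTuple n →₀ ℝ) : Prop :=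
  (∀ x, 0 ≤ χ x) ∧
    ∀ x ∈ χ.support, x.1 ≤ x.2.1 ∧ x.2.2.1 ∈ Set.Icc (0 : ℝ) 1 ∧
      x.2.2.2 ∈ Set.Icc (0 : ℝ) 1 ∧ S.theta x.1 ≤ x.2.2.1 ∧ x.2.2.1 ≤ S.theta x.2.1

/-- Feasibility of a bi-event post-processing plan for `ℓ_t` ECE budget `ε`. -/
def FeasibleBiPlan (S : Setup n) (t ε : ℝ) (χ : BiTuple n →₀ ℝ) : Prop :=
  IsBiPlan S χ ∧
    (∑ x ∈ χ.support, χ x * |x.2.2.1 - x.2.2.2| ^ t) ≤ ε ^ t ∧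
    ∀ i, (∑ x ∈ χ.support, χ x * contrib S x i) = S.lam i

/-- The value `f_i(p)` of the predictor generated by a bi-event post-processing plan. -/
def genValBi (S : Setup n) (χ : BiTuple n →₀ ℝ) (i : Fin n) (p : ℝ) : ℝ :=
  1 / S.lam i * ∑ x ∈ χ.support.filter fun x => x.2.2.2 = p, χ x * contrib S x i

/-- The objective of LP-TwoStep+: `∑ χ_{i,j}(q,p) U_{i,j}(q,p)`. -/
def biObj (S : Setup n) (U : Fin n → ℝ → ℝ) (χ : BiTuple n →₀ ℝ) : ℝ :=
  ∑ x ∈ χ.support, χ x * (ratio S x.1 x.2.1 x.2.2.1 * U x.1 x.2.2.2 +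
    (1 - ratio S x.1 x.2.1 x.2.2.1) * U x.2.1 x.2.2.2)

/-- The optimal value of LP-TwoStep+. -/
def OPTBi (S : Setup n) (U : Fin n → ℝ → ℝ) (t ε : ℝ) : ℝ :=
  sSup {v | ∃ χ : BiTuple n →₀ ℝ, FeasibleBiPlan S t ε χ ∧ v = biObj S U χ}

/-- `U` is piecewise constant with all its discontinuity points in `Z`. -/
def PiecewiseConstWrt (Z : Finset ℝ) (U : ℝ → ℝ) : Prop :=
  ∀ x ∈ Set.Icc (0 : ℝ) 1, ∀ y ∈ Set.Icc (0 : ℝ) 1,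
    (∀ z ∈ Z, z ∉ Set.uIcc x y) → U x = U y

/-- The bound `S = ⌈2 ln(1/δ) / ln(1+δ)⌉` of the second discretization layer. -/
def Sbound (δ : ℝ) : ℕ := ⌈2 * Real.log (1 / δ) / Real.log (1 + δ)⌉₊

/-- The instance-dependent two-layer discretized set `S_δ`. -/
def gridSet (S : Setup n) (Z : Finset ℝ) (ε t δ : ℝ) : Set ℝ :=
  ({x : ℝ | ∃ k : ℕ, x = (k : ℝ) * δ} ∪ {(1 : ℝ)} ∪ Set.range S.theta ∪ (↑Z : Set ℝ) ∪
      {x : ℝ | ∃ z ∈ (↑Z : Set ℝ) ∪ Set.range S.theta, ∃ s : ℕ, s ≤ Sbound δ ∧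
        (x = z + (ε ^ t * δ * (1 + δ) ^ s) ^ (1 / t) ∨
          x = z - (ε ^ t * δ * (1 + δ) ^ s) ^ (1 / t))}) ∩
    Set.Icc (0 : ℝ) 1

/-- Feasibility for the discretized program LP-DiscTwoStep+. -/
def DiscFeasibleBiPlan (S : Setup n) (Z : Finset ℝ) (t ε δ : ℝ) (χ : BiTuple n →₀ ℝ) : Prop :=
  FeasibleBiPlan S t ε χ ∧
    ∀ x ∈ χ.support, x.2.2.1 ∈ gridSet S Z ε t δ ∧ x.2.2.2 ∈ gridSet S Z ε t δ

/-- The optimal value of LP-DiscTwoStep+. -/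
def OPTBiDisc (S : Setup n) (U : Fin n → ℝ → ℝ) (Z : Finset ℝ) (t ε δ : ℝ) : ℝ :=
  sSup {v | ∃ χ : BiTuple n →₀ ℝ, DiscFeasibleBiPlan S Z t ε δ χ ∧ v = biObj S U χ}

/-- A Bayesian persuasion instance with signal-dependent bias: states `θ_i` with
prior `λ`, actions `A`, sender utility `u a i = u(a, θ_i) ≥ 0`, and receiver utility
determined by `v1 a = v(a,1)` and `v0 a = v(a,0)`. -/
structure PSetup (n : ℕ) (A : Type*) : Type _ where
  lam : Fin n → ℝ
  theta : Fin n → ℝ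
  u : A → Fin n → ℝ
  v1 : A → ℝ
  v0 : A → ℝ
  lam_pos : ∀ i, 0 < lam i
  lam_sum : ∑ i, lam i = 1
  theta_mem : ∀ i, theta i ∈ Set.Icc (0 : ℝ) 1
  u_nonneg : ∀ a i, 0 ≤ u a i

variable {A σT : Type*}

/-- The receiver's utility from action `a` at belief mean `x`. -/
def rcvU (P : PSetup n A) (a : A) (x : ℝ) : ℝ := x * P.v1 a + (1 - x) * P.v0 a

/-- The total probability `m(σ)` of a signal `σ`. -/
def mass [Fintype σT] (P : PSetup n A) (π : Fin n → σT → ℝ) (σ : σT) : ℝ :=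
  ∑ i, P.lam i * π i σ

/-- The biased posterior mean `p(σ)` of the receiver upon signal `σ`. -/
def belief [Fintype σT] (P : PSetup n A) (π : Fin n → σT → ℝ) (b : σT → ℝ) (σ : σT) : ℝ :=
  (b σ + ∑ i, P.lam i * π i σ * P.theta i) / mass P π σ

/-- Validity of a sender strategy `(π, b)`. -/
def ValidStrategy [Fintype σT] (P : PSetup n A) (π : Fin n → σT → ℝ) (b : σT → ℝ) : Prop :=
  (∀ i σ, 0 ≤ π i σ) ∧ (∀ i, ∑ σ, π i σ = 1) ∧
    ∀ σ, 0 < mass P π σ → belief P π b σ ∈ Set.Icc (0 : ℝ) 1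

/-- `astar` is a receiver best-response selection for the strategy `(π, b)`. -/
def BestResponse [Fintype σT] (P : PSetup n A) (π : Fin n → σT → ℝ) (b : σT → ℝ)
    (astar : σT → A) : Prop :=
  ∀ σ, 0 < mass P π σ → ∀ a, rcvU P a (belief P π b σ) ≤ rcvU P (astar σ) (belief P π b σ)

/-- The bounded-rationality constraint on the total bias. -/
def BRconstraint [Fintype σT] (P : PSetup n A) (t ε : ℝ) (π : Fin n → σT → ℝ)
    (b : σT → ℝ) : Prop :=
  (∑ σ, mass P π σ * |b σ / mass P π σ| ^ t) ^ (1 / t) ≤ ε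

/-- The sender's expected payoff from strategy `π` with receiver selection `astar`. -/
def senderPayoff [Fintype σT] (P : PSetup n A) (π : Fin n → σT → ℝ) (astar : σT → A) : ℝ :=
  ∑ i, P.lam i * ∑ σ, π i σ * P.u (astar σ) i

/-- Feasibility for the action-recommendation program P-ActRec. -/
def PActRecFeasible [Fintype A] (P : PSetup n A) (t ε : ℝ)
    (π : Fin n → A → ℝ) (b : A → ℝ) : Prop :=
  (∀ i a, 0 ≤ π i a) ∧ (∀ i, ∑ a, π i a = 1) ∧
  (∀ a, mass P π a = 0 → b a = 0) ∧
  (∑ a, mass P π a * |b a / mass P π a| ^ t) ≤ ε ^ t ∧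
  (∀ a, 0 ≤ b a + ∑ i, P.lam i * π i a * P.theta i) ∧
  (∀ a, b a + ∑ i, P.lam i * π i a * P.theta i ≤ mass P π a) ∧
  ∀ a a' : A,
    (b a + ∑ i, P.lam i * π i a * P.theta i) * P.v1 a' +
        (mass P π a - (b a + ∑ i, P.lam i * π i a * P.theta i)) * P.v0 a' ≤
      (b a + ∑ i, P.lam i * π i a * P.theta i) * P.v1 a +
        (mass P π a - (b a + ∑ i, P.lam i * π i a * P.theta i)) * P.v0 a

/-- The sender-side marginal probability of recommendation `a` (calibration model). -/
def pmass [Fintype A] (S : Setup n) (π : Fin n → A → ℝ) (a : A) : ℝ := ∑ i, S.lam i * π i a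

/-- The biased posterior mean associated with recommendation `a` (calibration model). -/
def pbelief [Fintype A] (S : Setup n) (π : Fin n → A → ℝ) (b : A → ℝ) (a : A) : ℝ :=
  (b a + ∑ i, S.lam i * π i a * S.theta i) / pmass S π a

/-- Instance equivalence, from persuasion strategy to predictor:
a direct sender strategy `(π, b)` with pairwise distinct biased posterior means,
followed recommendations, and bounded-rationality budget `(ε, t)` induces the
predictor `f_i(p) = ∑_a π_i(a) 1{p(a) = p}`, which is a finitely supported
`(ε, ℓ_t)`-calibrated predictor whose principal payoff equals the sender's payoff. -/
theorem statement19 {n : ℕ} {A : Type*} [Fintype A] (S : Setup n)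
    (u0 u1 : Fin n → A → ℝ) (v0 v1 : A → ℝ)
    (hu : ∀ i a, 0 ≤ u0 i a ∧ 0 ≤ u1 i a)
    (astar : ℝ → A)
    (hastar : ∀ p ∈ Set.Icc (0 : ℝ) 1, ∀ a : A,
      p * v1 a + (1 - p) * v0 a ≤ p * v1 (astar p) + (1 - p) * v0 (astar p))
    (t ε : ℝ) (ht : 1 ≤ t) (hε : 0 ≤ ε)
    (π : Fin n → A → ℝ) (b : A → ℝ)
    (hπ0 : ∀ i a, 0 ≤ π i a) (hπ1 : ∀ i, ∑ a, π i a = 1)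
    (hbel : ∀ a, 0 < pmass S π a → pbelief S π b a ∈ Set.Icc (0 : ℝ) 1)
    (hdist : ∀ a a' : A, 0 < pmass S π a → 0 < pmass S π a' → a ≠ a' →
      pbelief S π b a ≠ pbelief S π b a')
    (hfollow : ∀ a, 0 < pmass S π a → astar (pbelief S π b a) = a)
    (hBR : (∑ a, pmass S π a * |b a / pmass S π a| ^ t) ^ (1 / t) ≤ ε) :
    ∃ f : Fin n → ℝ →₀ ℝ,
      (∀ i p, f i p = ∑ a ∈ Finset.univ.filter fun a => pbelief S π b a = p, π i a) ∧
      IsPredictor f ∧ ECE S t f ≤ ε ∧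
      (∑ i, S.lam i * ∑ p ∈ (f i).support,
          f i p * (S.theta i * u1 i (astar p) + (1 - S.theta i) * u0 i (astar p))) =
        ∑ i, S.lam i * ∑ a, π i a * ((1 - S.theta i) * u0 i a + S.theta i * u1 i a) := by
  classical
  have hmass0 : ∀ a, 0 ≤ pmass S π a := fun a =>
    Finset.sum_nonneg fun i _ => mul_nonneg (S.lam_pos i).le (hπ0 i a)
  have hpos : ∀ i a, π i a ≠ 0 → 0 < pmass S π a := by
    intro i a h
    refine Finset.sum_pos' (fun j _ => mul_nonneg (S.lam_pos j).le (hπ0 j a)) ⟨i, mem_univ _, ?_⟩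
    exact mul_pos (S.lam_pos i) (lt_of_le_of_ne (hπ0 i a) (Ne.symm h))
  set f : Fin n → ℝ →₀ ℝ := fun i => ∑ a, Finsupp.single (pbelief S π b a) (π i a) with hf
  have hfv : ∀ i p, f i p = ∑ a ∈ Finset.univ.filter fun a => pbelief S π b a = p, π i a := by
    intro i p
    simp only [hf, Finsupp.finsetSum_apply, Finsupp.single_apply, Finset.sum_filter]
  have hsum : ∀ i (g : ℝ → ℝ), ∑ p ∈ (f i).support, f i p * g p
      = ∑ a, π i a * g (pbelief S π b a) := by
    intro i g
    change (f i).sum (fun p x => x * g p) = _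
    simp only [hf]
    rw [← Finsupp.sum_finsetSum_index (by simp) (by intros; ring)]
    refine Finset.sum_congr rfl fun a _ => ?_
    rw [Finsupp.sum_single_index (by simp)]
  have hf0 : ∀ i p, 0 ≤ f i p := fun i p => by
    rw [hfv]; exact Finset.sum_nonneg fun a _ => hπ0 i a
  have hsupp : ∀ i p, p ∈ (f i).support → ∃ a, 0 < pmass S π a ∧ pbelief S π b a = p := by
    intro i p hp
    rw [Finsupp.mem_support_iff, hfv] at hp
    obtain ⟨a, ha, ha'⟩ := Finset.exists_ne_zero_of_sum_ne_zero hp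
    exact ⟨a, hpos i a ha', (Finset.mem_filter.1 ha).2⟩
  have hfa : ∀ i a, 0 < pmass S π a → f i (pbelief S π b a) = π i a := by
    intro i a ha
    rw [hfv]
    refine Finset.sum_eq_single_of_mem a (by simp) fun a' ha' hne => ?_
    by_contra h
    exact hdist a' a (hpos i a' h) ha hne (Finset.mem_filter.1 ha').2
  have hmarg : ∀ a, 0 < pmass S π a → marginal S f (pbelief S π b a) = pmass S π a := by
    intro a ha
    exact Finset.sum_congr rfl fun i _ => by rw [hfa i a ha]
  have hkap : ∀ a, 0 < pmass S π a →
      |kappa S f (pbelief S π b a) - pbelief S π b a| = |b a / pmass S π a| := by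
    intro a ha
    have h1 : kappa S f (pbelief S π b a) = (∑ i, S.lam i * π i a * S.theta i) / pmass S π a := by
      unfold kappa
      rw [hmarg a ha]
      congr 1
      exact Finset.sum_congr rfl fun i _ => by rw [hfa i a ha]
    rw [h1, ← abs_neg (b a / pmass S π a)]
    congr 1
    unfold pbelief
    ring
  have hm0 : ∀ p, 0 ≤ marginal S f p := fun p =>
    Finset.sum_nonneg fun i _ => mul_nonneg (S.lam_pos i).le (hf0 i p)
  refine ⟨f, hfv, fun i => ⟨hf0 i, ?_, ?_⟩, ?_, ?_⟩
  · intro p hp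
    obtain ⟨a, ha, rfl⟩ := hsupp i p hp
    exact hbel a ha
  · have := hsum i (fun _ => 1)
    simp only [mul_one] at this
    rw [this, hπ1]
  · refine le_trans ?_ hBR
    unfold ECE
    refine Real.rpow_le_rpow (Finset.sum_nonneg fun p _ => mul_nonneg (hm0 p) (by positivity)) ?_
      (by positivity)
    calc _ ≤ ∑ p ∈ (Finset.univ.filter fun a => 0 < pmass S π a).image (pbelief S π b),
            marginal S f p * |kappa S f p - p| ^ t := by
          refine Finset.sum_le_sum_of_subset_of_nonneg ?_ fun p _ _ =>
            mul_nonneg (hm0 p) (by positivity)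
          intro p hp
          obtain ⟨i, -, hi⟩ := Finset.mem_biUnion.1 hp
          obtain ⟨a, ha, h⟩ := hsupp i p hi
          exact Finset.mem_image.2 ⟨a, by simp [ha], h⟩
      _ = ∑ a ∈ Finset.univ.filter fun a => 0 < pmass S π a,
            pmass S π a * |b a / pmass S π a| ^ t := by
          rw [Finset.sum_image]
          · refine Finset.sum_congr rfl fun a ha => ?_
            have ha' := (Finset.mem_filter.1 ha).2
            rw [hmarg a ha', hkap a ha']
          · intro a ha a' ha' h
            by_contra hne
            exact hdist a a' (by simpa using ha) (by simpa using ha') hne h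
      _ ≤ _ := Finset.sum_le_sum_of_subset_of_nonneg (Finset.filter_subset _ _) fun a _ _ =>
            mul_nonneg (hmass0 a) (by positivity)
  · refine Finset.sum_congr rfl fun i _ => ?_
    rw [hsum i (fun p => S.theta i * u1 i (astar p) + (1 - S.theta i) * u0 i (astar p))]
    congr 1
    refine Finset.sum_congr rfl fun a _ => ?_
    by_cases h : π i a = 0
    · simp [h]
    · rw [hfollow a (hpos i a h)]
      ring

end PersuasiveCalibration
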